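/- Let p > 2, w(s) = (cosh s)^{-2/(p-2)}, and χ(s) = -((p-2)/(4(p-1))) (2 w(s) - w(s)^{p-1}). Then ∫_ℝ χ(s) w(s)^{p-1} ds = -((p-2)/(3p-2)) ∫_ℝ w(s)^p ds. -/

import Mathlib

open MeasureTheory

/-! The derivative of `sinh * cosh ^ (a - 1)` is `a * cosh ^ a - (a - 1) * cosh ^ (a - 2)`, so
integrating over `ℝ` gives `(a - 1) ∫ cosh ^ (a - 2) = a ∫ cosh ^ a` for `a < 0`. Since `w ^ p` and
`w ^ (2 p - 2)` are powers of `cosh` whose exponents differ by exactly `2`, this expresses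
`∫ w ^ (2 p - 2)`, and with it `∫ χ w ^ (p - 1)`, through `∫ w ^ p`. -/

lemma integrable_exp_mul_abs {a : ℝ} (ha : a < 0) :
    Integrable fun s : ℝ => Real.exp (a * |s|) := by
  rw [← integrableOn_univ, ← Set.Iic_union_Ioi (a := (0 : ℝ))]
  refine IntegrableOn.union ?_ ?_
  · refine (integrableOn_exp_mul_Iic (neg_pos.2 ha) 0).congr_fun (fun s hs => ?_) measurableSet_Iic
    simp only [abs_of_nonpos (Set.mem_Iic.1 hs), mul_neg, neg_mul]
  · refine (integrableOn_exp_mul_Ioi ha 0).congr_fun (fun s hs => ?_) measurableSet_Ioi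
    simp only [abs_of_pos (Set.mem_Ioi.1 hs)]

lemma exp_abs_div_two_le_cosh (s : ℝ) : Real.exp |s| / 2 ≤ Real.cosh s := by
  rw [Real.cosh_eq]
  linarith [Real.exp_abs_le s]

lemma abs_sinh_le_cosh (s : ℝ) : |Real.sinh s| ≤ Real.cosh s := by
  rw [Real.abs_sinh, ← Real.cosh_abs s]
  exact (Real.sinh_lt_cosh _).le

lemma continuous_cosh_rpow (a : ℝ) : Continuous fun s : ℝ => Real.cosh s ^ a :=
  Real.continuous_cosh.rpow_const fun s => Or.inl (Real.cosh_pos s).ne'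

lemma cosh_rpow_le_mul_exp {a : ℝ} (ha : a ≤ 0) (s : ℝ) :
    Real.cosh s ^ a ≤ (2 ^ a)⁻¹ * Real.exp (a * |s|) :=
  calc Real.cosh s ^ a ≤ (Real.exp |s| / 2) ^ a :=
        Real.rpow_le_rpow_of_nonpos (by positivity) (exp_abs_div_two_le_cosh s) ha
    _ = (2 ^ a)⁻¹ * Real.exp (a * |s|) := by
        rw [Real.div_rpow (Real.exp_pos _).le zero_le_two, ← Real.exp_mul, mul_comm |s| a,
          div_eq_inv_mul]

lemma integrable_cosh_rpow {a : ℝ} (ha : a < 0) : Integrable fun s : ℝ => Real.cosh s ^ a := by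
  refine ((integrable_exp_mul_abs ha).const_mul (2 ^ a)⁻¹).mono'
    (continuous_cosh_rpow a).aestronglyMeasurable (.of_forall fun s => ?_)
  rw [Real.norm_of_nonneg (Real.rpow_nonneg (Real.cosh_pos s).le a)]
  exact cosh_rpow_le_mul_exp ha.le s

lemma integrable_sinh_mul_cosh_rpow {a : ℝ} (ha : a < 0) :
    Integrable fun s : ℝ => Real.sinh s * Real.cosh s ^ (a - 1) := by
  refine (integrable_cosh_rpow ha).mono'
    (Real.continuous_sinh.mul (continuous_cosh_rpow (a - 1))).aestronglyMeasurable
    (.of_forall fun s => ?_)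
  have hc := Real.cosh_pos s
  calc ‖Real.sinh s * Real.cosh s ^ (a - 1)‖ = |Real.sinh s| * Real.cosh s ^ (a - 1) := by
        rw [norm_mul, Real.norm_eq_abs, Real.norm_of_nonneg (Real.rpow_nonneg hc.le _)]
    _ ≤ Real.cosh s * Real.cosh s ^ (a - 1) := by
        gcongr
        exact abs_sinh_le_cosh s
    _ = Real.cosh s ^ a := by
        rw [mul_comm, ← Real.rpow_add_one hc.ne', sub_add_cancel]

lemma hasDerivAt_sinh_mul_cosh_rpow (a s : ℝ) :
    HasDerivAt (fun s => Real.sinh s * Real.cosh s ^ (a - 1))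
      (a * Real.cosh s ^ a - (a - 1) * Real.cosh s ^ (a - 2)) s := by
  have hc := (Real.cosh_pos s).ne'
  have h := (Real.hasDerivAt_sinh s).mul
    ((Real.hasDerivAt_cosh s).rpow_const (p := a - 1) (Or.inl hc))
  refine h.congr_deriv ?_
  have h_one : Real.cosh s ^ (a - 1) = Real.cosh s ^ (a - 2) * Real.cosh s := by
    rw [← Real.rpow_add_one hc]
    ring_nf
  have h_two : Real.cosh s ^ a = Real.cosh s ^ (a - 2) * Real.cosh s ^ 2 := by
    rw [← Real.rpow_add_natCast hc]
    norm_num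
  rw [sub_sub, one_add_one_eq_two, h_one, h_two, Real.cosh_sq]
  linear_combination Real.cosh s ^ (a - 2) * Real.cosh_sq s

lemma integral_cosh_rpow_sub_two {a : ℝ} (ha : a < 0) :
    ∫ s : ℝ, Real.cosh s ^ (a - 2) = a / (a - 1) * ∫ s : ℝ, Real.cosh s ^ a := by
  have h_int := (integrable_cosh_rpow ha).const_mul a
  have h_int' := (integrable_cosh_rpow (a := a - 2) (by linarith)).const_mul (a - 1)
  have h_zero := integral_eq_zero_of_hasDerivAt_of_integrable
    (hasDerivAt_sinh_mul_cosh_rpow a) (h_int.sub h_int') (integrable_sinh_mul_cosh_rpow ha)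
  rw [integral_sub h_int h_int', integral_const_mul, integral_const_mul] at h_zero
  rw [div_mul_eq_mul_div, eq_div_iff (by linarith)]
  linarith

/-- The soliton profile `w(s) = (cosh s)^{-2/(p-2)}` of the one-dimensional nonlinear Schrödinger
equation with power nonlinearity `w ^ (p - 1)`, up to scaling. For `p = 2` the exponent
is the junk value `0`. -/
noncomputable def solitonProfile (p s : ℝ) : ℝ := Real.cosh s ^ (-(2 / (p - 2)))

lemma solitonProfile_pos (p s : ℝ) : 0 < solitonProfile p s :=
  Real.rpow_pos_of_pos (Real.cosh_pos s) _

lemma solitonProfile_rpow (p q s : ℝ) :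
    solitonProfile p s ^ q = Real.cosh s ^ (-(2 * (q / (p - 2)))) := by
  rw [solitonProfile, ← Real.rpow_mul (Real.cosh_pos s).le]
  ring_nf

lemma integrable_solitonProfile_rpow {p q : ℝ} (hpq : 0 < q / (p - 2)) :
    Integrable fun s : ℝ => solitonProfile p s ^ q := by
  simp only [solitonProfile_rpow]
  exact integrable_cosh_rpow (by linarith)

lemma div_sub_two_pos {p : ℝ} (hp : p < 0 ∨ 2 < p) : 0 < p / (p - 2) := by
  rcases hp with hp | hp
  · exact div_pos_of_neg_of_neg hp (by linarith)
  · exact div_pos (by linarith) (by linarith)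

lemma two_mul_sub_two_div_sub_two {p : ℝ} (hp : p ≠ 2) :
    (2 * p - 2) / (p - 2) = p / (p - 2) + 1 := by
  have := sub_ne_zero.2 hp
  field_simp
  ring

lemma integral_solitonProfile_rpow_two_mul_sub_two {p : ℝ} (hp : p < 0 ∨ 2 < p) :
    ∫ s : ℝ, solitonProfile p s ^ (2 * p - 2) =
      2 * p / (3 * p - 2) * ∫ s : ℝ, solitonProfile p s ^ p := by
  have hp2 : p ≠ 2 := by rintro rfl; norm_num at hp
  have h_exp : -(2 * ((2 * p - 2) / (p - 2))) = -(2 * (p / (p - 2))) - 2 := by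
    rw [two_mul_sub_two_div_sub_two hp2]
    ring
  have h_coeff : -(2 * (p / (p - 2))) / (-(2 * (p / (p - 2))) - 1) = 2 * p / (3 * p - 2) := by
    have := sub_ne_zero.2 hp2
    rw [← neg_div_neg_eq, ← mul_div_mul_right _ _ this]
    congr 1
    · field_simp
    · field_simp
      ring
  simp only [solitonProfile_rpow, h_exp]
  rw [integral_cosh_rpow_sub_two (by linarith [div_sub_two_pos hp]), h_coeff]

lemma integral_two_mul_solitonProfile_rpow_sub {p : ℝ} (hp : p < 0 ∨ 2 < p) :
    ∫ s : ℝ, (2 * solitonProfile p s ^ p - solitonProfile p s ^ (2 * p - 2)) =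
      4 * (p - 1) / (3 * p - 2) * ∫ s : ℝ, solitonProfile p s ^ p := by
  have hp2 : p ≠ 2 := by rintro rfl; norm_num at hp
  have hp3 : 3 * p - 2 ≠ 0 := by rcases hp with hp | hp <;> intro h <;> linarith
  have h_pos := div_sub_two_pos hp
  have h_pos' : 0 < (2 * p - 2) / (p - 2) := by
    rw [two_mul_sub_two_div_sub_two hp2]
    linarith
  rw [integral_sub ((integrable_solitonProfile_rpow h_pos).const_mul 2)
    (integrable_solitonProfile_rpow h_pos'), integral_const_mul,
    integral_solitonProfile_rpow_two_mul_sub_two hp, ← sub_mul]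
  congr 1
  rw [eq_div_iff hp3, sub_mul, div_mul_cancel₀ _ hp3]
  ring

lemma two_mul_sub_rpow_mul_rpow {x : ℝ} (hx : 0 < x) (p : ℝ) :
    (2 * x - x ^ (p - 1)) * x ^ (p - 1) = 2 * x ^ p - x ^ (2 * p - 2) := by
  have h_mul : x * x ^ (p - 1) = x ^ p := by
    rw [mul_comm, ← Real.rpow_add_one hx.ne', sub_add_cancel]
  have h_sq : x ^ (p - 1) * x ^ (p - 1) = x ^ (2 * p - 2) := by
    rw [← Real.rpow_add hx]
    ring_nf
  rw [sub_mul, mul_assoc, h_mul, h_sq]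

theorem statement12_general (p : ℝ) (hp : p < 0 ∨ 2 < p)
    (w : ℝ → ℝ) (hw : ∀ s, w s = Real.cosh s ^ (-(2 / (p - 2))))
    (χ : ℝ → ℝ) (hχ : ∀ s, χ s = -((p - 2) / (4 * (p - 1))) * (2 * w s - w s ^ (p - 1))) :
    (∫ s : ℝ, χ s * w s ^ (p - 1)) = -((p - 2) / (3 * p - 2)) * ∫ s : ℝ, w s ^ p := by
  obtain rfl : w = solitonProfile p := funext hw
  have hp1 : p - 1 ≠ 0 := by rcases hp with hp | hp <;> intro h <;> linarith
  have h_integrand (s : ℝ) : χ s * solitonProfile p s ^ (p - 1) = -((p - 2) / (4 * (p - 1))) *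
      (2 * solitonProfile p s ^ p - solitonProfile p s ^ (2 * p - 2)) := by
    rw [hχ, mul_assoc, two_mul_sub_rpow_mul_rpow (solitonProfile_pos p s)]
  simp_rw [h_integrand]
  rw [integral_const_mul, integral_two_mul_solitonProfile_rpow_sub hp, ← mul_assoc]
  congr 1
  field_simp

/-- For `p > 2`, `w(s) = (cosh s)^{-2/(p-2)}` and
`χ(s) = -((p-2)/(4(p-1)))(2w - w^{p-1})`, one has
`∫ χ w^{p-1} = -((p-2)/(3p-2)) ∫ w^p`. -/
theorem statement12 (p : ℝ) (hp : 2 < p)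
    (w : ℝ → ℝ) (hw : ∀ s, w s = Real.cosh s ^ (-(2 / (p - 2))))
    (χ : ℝ → ℝ) (hχ : ∀ s, χ s = -((p - 2) / (4 * (p - 1))) * (2 * w s - w s ^ (p - 1))) :
    (∫ s : ℝ, χ s * w s ^ (p - 1)) = -((p - 2) / (3 * p - 2)) * ∫ s : ℝ, w s ^ p :=
  statement12_general p (.inr hp) w hw χ hχ
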